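/- Hailperin's pq-entailment does not respect conjunction of hypotheses: the singleton {B₁ ∧ ¬B₁} Hailperin-(1/2,1/4)-entails ⊥, but the two-element set {B₁, ¬B₁} does not Hailperin-(1/2,1/4)-entail ⊥; in particular there exists a stochastic valuation μ with Prob_μ(B₁) = Prob_μ(¬B₁) = 1/2 and Prob_μ(⊥) = 0. -/

import Mathlib

open MeasureTheory

/-- Propositional formulas over atoms `B_j`, `j : ℕ`, with `¬` and `→`. -/
inductive PropForm : Type
  | atom : ℕ → PropForm
  | neg : PropForm → PropForm
  | imp : PropForm → PropForm → PropForm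
  deriving DecidableEq

namespace PropForm

def conj (α β : PropForm) : PropForm := neg (imp α (neg β))
def disj (α β : PropForm) : PropForm := imp (neg α) β
def biimp (α β : PropForm) : PropForm := conj (imp α β) (imp β α)
def top : PropForm := imp (atom 0) (atom 0)
def bot : PropForm := neg top

/-- Satisfaction of a formula by a valuation `v : ℕ → Bool` (a subset of ℕ). -/
def sat (v : ℕ → Bool) : PropForm → Prop
  | atom j => v j = true
  | neg α => ¬ sat v α
  | imp α β => sat v α → sat v β

/-- The finite set `B_α` of indices of atoms occurring in `α`. -/
def atoms : PropForm → Finset ℕ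
  | atom j => {j}
  | neg α => atoms α
  | imp α β => atoms α ∪ atoms β

end PropForm

/-- `⊨ α`: every valuation satisfies `α`. -/
def Valid (α : PropForm) : Prop := ∀ v, PropForm.sat v α

/-- `α ⊨ β`. -/
def Entails (α β : PropForm) : Prop := ∀ v, PropForm.sat v α → PropForm.sat v β

/-- `Δ ⊨ α`. -/
def SetEntails (Δ : Set PropForm) (α : PropForm) : Prop :=
  ∀ v, (∀ δ ∈ Δ, PropForm.sat v δ) → PropForm.sat v α

/-- Conjunction of a list of formulas (empty conjunction is `⊤`). -/
def bigConj (l : List PropForm) : PropForm := l.foldr PropForm.conj PropForm.top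

/-- Disjunction of a list of formulas (empty disjunction is `⊥`). -/
def bigDisj (l : List PropForm) : PropForm := l.foldr PropForm.disj PropForm.bot

/-- `φ_A^U = (⋀_{j∈U} B_j) ∧ (⋀_{j∈A∖U} ¬B_j)`. -/
def phi (A U : Finset ℕ) : PropForm :=
  PropForm.conj (bigConj ((U.sort (· ≤ ·)).map PropForm.atom))
    (bigConj (((A \ U).sort (· ≤ ·)).map (fun j => PropForm.neg (PropForm.atom j))))

/-- The space of valuations, `2^ℕ` identified with `{0,1}^ℕ`, with the product σ-algebra. -/
abbrev Val := ℕ → Bool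

/-- `v ∩ A` for a valuation `v` and a finite `A ⊆ ℕ`. -/
def restrict (v : Val) (A : Finset ℕ) : Finset ℕ := A.filter (fun j => v j = true)

/-- `Prob_μ(α) = μ{v : v ⊨ α}`. -/
noncomputable def Prob (μ : Measure Val) (α : PropForm) : ℝ :=
  (μ {v | PropForm.sat v α}).toReal

/-- Hailperin's `(p,q)`-entailment: every stochastic valuation giving probability at least
`p` to each hypothesis gives probability at least `q` to the conclusion. -/
def hailperinEntails (Δ : Set PropForm) (α : PropForm) (p q : ℝ) : Prop :=
  ∀ μ : MeasureTheory.Measure Val, IsProbabilityMeasure μ →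
    (∀ δ ∈ Δ, p ≤ Prob μ δ) → q ≤ Prob μ α

/-!
A contradictory hypothesis has probability `0` under every stochastic valuation, so for `p > 0` its
constraint cannot be met and it entails everything. By contrast, if `α` holds at a valuation `v` and
fails at `w`, the fair coin toss between `v` and `w` gives both `α` and `¬α` probability `1/2`, so
the constraints on `α` and `¬α` separately can be met for every `p ≤ 1/2`.
-/

namespace PropForm

variable {α : PropForm}

theorem valid_neg_bot : Valid (neg bot) :=
  fun _ hbot => hbot id

theorem valid_neg_conj_neg (α : PropForm) : Valid (neg (conj α (neg α))) :=
  fun _ hconj => hconj fun hα hnα => hnα hα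

theorem not_valid_atom (j : ℕ) : ¬ Valid (atom j) :=
  fun h => Bool.false_ne_true (h fun _ => false)

theorem not_valid_neg_atom (j : ℕ) : ¬ Valid (neg (atom j)) :=
  fun h => h (fun _ => true) rfl

theorem exists_sat_of_not_valid_neg (h : ¬ Valid (neg α)) : ∃ v, sat v α := by
  simpa only [Valid, sat, not_forall, not_not] using h

theorem measurableSet_setOf_sat (α : PropForm) : MeasurableSet {v : Val | sat v α} := by
  induction α with
  | atom j => exact measurableSet_eq_fun (measurable_pi_apply j) measurable_const
  | neg α hα => exact hα.compl
  | imp α β hα hβ => exact hα.imp hβ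

end PropForm

section Probability

open PropForm

variable {α : PropForm} {μ : Measure Val}

theorem prob_eq_zero_of_valid_neg (hα : Valid (neg α)) : Prob μ α = 0 := by
  have hempty : {v : Val | sat v α} = ∅ := Set.eq_empty_of_forall_notMem hα
  rw [Prob, hempty, measure_empty, ENNReal.toReal_zero]

theorem prob_neg [IsProbabilityMeasure μ] (α : PropForm) : Prob μ (neg α) = 1 - Prob μ α :=
  probReal_compl_eq_one_sub (measurableSet_setOf_sat α)

theorem exists_prob_eq (hα : ¬ Valid α) (hnα : ¬ Valid (neg α)) {t : ℝ} (ht : t ∈ unitInterval) :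
    ∃ μ : Measure Val, IsProbabilityMeasure μ ∧ Prob μ α = t := by
  obtain ⟨v, hv⟩ := exists_sat_of_not_valid_neg hnα
  obtain ⟨w, hw⟩ := not_forall.mp hα
  exact ⟨ProbabilityTheory.bernoulliMeasure v w ⟨t, ht⟩, inferInstance,
    ProbabilityTheory.bernoulliMeasure_real_apply_of_mem_of_notMem _
      (measurableSet_setOf_sat α) hv hw⟩

theorem exists_prob_eq_half_prob_neg_eq_half (hα : ¬ Valid α) (hnα : ¬ Valid (neg α)) :
    ∃ μ : Measure Val, IsProbabilityMeasure μ ∧ Prob μ α = 1 / 2 ∧ Prob μ (neg α) = 1 / 2 := by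
  obtain ⟨μ, hμ, hprob⟩ := exists_prob_eq hα hnα (t := 1 / 2) ⟨by norm_num, by norm_num⟩
  exact ⟨μ, hμ, hprob, by rw [prob_neg, hprob]; norm_num⟩

end Probability

section Entailment

open PropForm

variable {α β δ : PropForm} {Δ : Set PropForm} {p q : ℝ}

theorem hailperinEntails_of_mem_of_valid_neg (hp : 0 < p) (hδ : δ ∈ Δ) (hnδ : Valid (neg δ)) :
    hailperinEntails Δ β p q := by
  intro μ _ hΔ
  have hle : p ≤ 0 := (hΔ δ hδ).trans_eq (prob_eq_zero_of_valid_neg hnδ)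
  exact absurd hle hp.not_ge

theorem not_hailperinEntails_pair_neg (hα : ¬ Valid α) (hnα : ¬ Valid (neg α))
    (hβ : Valid (neg β)) (hp : p ≤ 1 / 2) (hq : 0 < q) :
    ¬ hailperinEntails {α, neg α} β p q := by
  intro hent
  obtain ⟨μ, hμ, hprob, hprob_neg⟩ := exists_prob_eq_half_prob_neg_eq_half hα hnα
  have hpair : ∀ δ ∈ ({α, neg α} : Set PropForm), p ≤ Prob μ δ := by
    rintro δ (rfl | rfl)
    · exact hp.trans_eq hprob.symm
    · exact hp.trans_eq hprob_neg.symm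
  have hle : q ≤ 0 := (hent μ hμ hpair).trans_eq (prob_eq_zero_of_valid_neg hβ)
  exact hq.not_ge hle

theorem hailperin_not_conjunctive_general (hα : ¬ Valid α) (hnα : ¬ Valid (neg α))
    (hp₀ : 0 < p) (hp : p ≤ 1 / 2) (hq : 0 < q) :
    hailperinEntails {conj α (neg α)} bot p q ∧
    ¬ hailperinEntails {α, neg α} bot p q ∧
    ∃ μ : Measure Val, IsProbabilityMeasure μ ∧
      Prob μ α = 1 / 2 ∧ Prob μ (neg α) = 1 / 2 ∧ Prob μ bot = 0 := by
  refine ⟨hailperinEntails_of_mem_of_valid_neg hp₀ rfl (valid_neg_conj_neg α),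
    not_hailperinEntails_pair_neg hα hnα valid_neg_bot hp hq, ?_⟩
  obtain ⟨μ, hμ, hprob, hprob_neg⟩ := exists_prob_eq_half_prob_neg_eq_half hα hnα
  exact ⟨μ, hμ, hprob, hprob_neg, prob_eq_zero_of_valid_neg valid_neg_bot⟩

end Entailment

/-- `{B₁ ∧ ¬B₁}` Hailperin-(1/2,1/4)-entails `⊥`, but `{B₁, ¬B₁}` does not;
in particular there is a stochastic valuation `μ` with
`Prob_μ(B₁) = Prob_μ(¬B₁) = 1/2` and `Prob_μ(⊥) = 0`. -/
theorem hailperin_not_conjunctive :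
    hailperinEntails {PropForm.conj (PropForm.atom 1) (PropForm.neg (PropForm.atom 1))}
      PropForm.bot (1/2) (1/4) ∧
    ¬ hailperinEntails {PropForm.atom 1, PropForm.neg (PropForm.atom 1)}
      PropForm.bot (1/2) (1/4) ∧
    ∃ μ : MeasureTheory.Measure Val, IsProbabilityMeasure μ ∧
      Prob μ (PropForm.atom 1) = 1/2 ∧
      Prob μ (PropForm.neg (PropForm.atom 1)) = 1/2 ∧
      Prob μ PropForm.bot = 0 := by
  exact hailperin_not_conjunctive_general (PropForm.not_valid_atom 1)
    (PropForm.not_valid_neg_atom 1) (by norm_num) le_rfl (by norm_num)
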